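/- If two p-ASFs (f, τ) and (g, ω) for X are similar, then they are not orthogonal; in particular θ_τ ∘ θ_g ≠ 0. -/

import Mathlib

open scoped ENNReal

/-- A p-approximate Schauder frame (p-ASF) for a Banach space `X`:
functionals `f`, vectors `τ`, an invertible frame operator `S` with
`S x = ∑ f n x • τ n`, a bounded analysis operator `θf` into `ℓ^p(ℕ)`,
and a bounded synthesis operator `θτ` from `ℓ^p(ℕ)`. -/
structure pASF (p : ℝ≥0∞) [Fact (1 ≤ p)] (X : Type*) [NormedAddCommGroup X]
    [NormedSpace ℝ X] where
  f : ℕ → X →L[ℝ] ℝ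
  τ : ℕ → X
  S : X ≃L[ℝ] X
  hS : ∀ x : X, HasSum (fun n => f n x • τ n) (S x)
  θf : X →L[ℝ] lp (fun _ : ℕ => ℝ) p
  hθf : ∀ (x : X) (n : ℕ), (θf x : ℕ → ℝ) n = f n x
  θτ : lp (fun _ : ℕ => ℝ) p →L[ℝ] X
  hθτ : ∀ a : lp (fun _ : ℕ => ℝ) p, HasSum (fun n => (a : ℕ → ℝ) n • τ n) (θτ a)

/-- `G` is orthogonal to `F`: `0 = ∑ G.f n x • F.τ n = ∑ F.f n x • G.τ n`. -/
def pASF.IsOrthogonal {p : ℝ≥0∞} [Fact (1 ≤ p)] {X : Type*} [NormedAddCommGroup X]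
    [NormedSpace ℝ X] (F G : pASF p X) : Prop :=
  ∀ x : X, HasSum (fun n => G.f n x • F.τ n) (0 : X) ∧
    HasSum (fun n => F.f n x • G.τ n) (0 : X)

/-!
Orthogonality says exactly that the mixed compositions `θ_τ ∘ θ_g` and `θ_ω ∘ θ_f` vanish. If
`g_n = f_n ∘ T` for all `n`, then `θ_g = θ_f ∘ T`, so `θ_τ ∘ θ_g = S_{f,τ} ∘ T`; since `S_{f,τ}` is
invertible, this vanishes only if `T` does.
-/

namespace pASF

variable {p : ℝ≥0∞} [Fact (1 ≤ p)] {X Y : Type*} [NormedAddCommGroup X] [NormedSpace ℝ X]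
  [NormedAddCommGroup Y] [NormedSpace ℝ Y]

theorem hasSum_θτ_θf (F : pASF p X) (G : pASF p Y) (y : Y) :
    HasSum (fun n => G.f n y • F.τ n) (F.θτ (G.θf y)) := by
  simpa only [G.hθf] using F.hθτ (G.θf y)

theorem isOrthogonal_iff_comp_eq_zero {F G : pASF p X} :
    F.IsOrthogonal G ↔ F.θτ.comp G.θf = 0 ∧ G.θτ.comp F.θf = 0 := by
  have hasSum_zero_iff (F G : pASF p X) (x : X) :
      HasSum (fun n => G.f n x • F.τ n) 0 ↔ F.θτ (G.θf x) = 0 :=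
    ⟨(F.hasSum_θτ_θf G x).unique, fun h => h ▸ F.hasSum_θτ_θf G x⟩
  simp only [IsOrthogonal, hasSum_zero_iff, forall_and, ContinuousLinearMap.ext_iff,
    ContinuousLinearMap.comp_apply, zero_apply]

theorem θτ_comp_θf_self (F : pASF p X) : F.θτ.comp F.θf = (F.S : X →L[ℝ] X) :=
  ContinuousLinearMap.ext fun x => (F.hasSum_θτ_θf F x).unique (F.hS x)

theorem θf_eq_comp {F : pASF p X} {G : pASF p Y} {T : Y →L[ℝ] X}
    (hT : ∀ n, G.f n = (F.f n).comp T) :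
    G.θf = F.θf.comp T := by
  ext y n
  simp only [ContinuousLinearMap.comp_apply, hθf, hT]

theorem θτ_comp_θf_eq_S_comp {F : pASF p X} {G : pASF p Y} {T : Y →L[ℝ] X}
    (hT : ∀ n, G.f n = (F.f n).comp T) :
    F.θτ.comp G.θf = (F.S : X →L[ℝ] X).comp T := by
  rw [θf_eq_comp hT, ← ContinuousLinearMap.comp_assoc, θτ_comp_θf_self]

end pASF

theorem stmt_19_general {X : Type*} [NormedAddCommGroup X] [NormedSpace ℝ X]
    {p : ℝ≥0∞} [Fact (1 ≤ p)] {F G : pASF p X} {T : X →L[ℝ] X} (hT_ne : T ≠ 0)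
    (hT : ∀ n, G.f n = (F.f n).comp T) :
    ¬ F.IsOrthogonal G ∧ F.θτ.comp G.θf ≠ 0 := by
  have comp_ne_zero : F.θτ.comp G.θf ≠ 0 := by
    rw [pASF.θτ_comp_θf_eq_S_comp hT]
    exact fun h => hT_ne <| ContinuousLinearMap.ext fun x =>
      F.S.map_eq_zero_iff.mp (DFunLike.congr_fun h x)
  exact ⟨fun h => comp_ne_zero (pASF.isOrthogonal_iff_comp_eq_zero.mp h).1, comp_ne_zero⟩

/-- two similar p-ASFs are never orthogonal; in particular
`θ_τ ∘ θ_g ≠ 0`. -/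
theorem stmt_19 {X : Type*} [NormedAddCommGroup X] [NormedSpace ℝ X] [CompleteSpace X]
    [Nontrivial X]
    (p : ℝ≥0∞) [Fact (1 ≤ p)] (hp : p ≠ ∞) (F G : pASF p X)
    (hsim : ∃ Tfg Tτω : X ≃L[ℝ] X,
      (∀ n, G.f n = (F.f n).comp (Tfg : X →L[ℝ] X)) ∧
      (∀ n, G.τ n = Tτω (F.τ n))) :
    ¬ F.IsOrthogonal G ∧ F.θτ.comp G.θf ≠ 0 := by
  obtain ⟨Tfg, -, hTfg, -⟩ := hsim
  exact stmt_19_general (norm_pos_iff.mp Tfg.norm_pos) hTfg
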